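/- If C is a finite family of (possibly rotated) unit squares in the plane, then τ(C) ≤ 6·ν(C), where τ is the minimum number of points hitting every square of C and ν is the maximum number of pairwise disjoint squares in C. -/

import Mathlib

open Classical MeasureTheory
noncomputable section

/-- Points of the Euclidean plane. -/
abbrev Pt := EuclideanSpace ℝ (Fin 2)

/-- A finite point set `H` hits every member of the family `F`. -/
def Hits (H : Finset Pt) (F : Finset (Set Pt)) : Prop := ∀ S ∈ F, ∃ p ∈ H, p ∈ S

/-- The hitting number τ of a family. -/
def hitNum (F : Finset (Set Pt)) : ℕ := sInf {n | ∃ H : Finset Pt, H.card = n ∧ Hits H F}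

/-- The packing number ν of a family. -/
def packNum (F : Finset (Set Pt)) : ℕ :=
  sSup {n | ∃ P ⊆ F, P.card = n ∧ (P : Set (Set Pt)).Pairwise Disjoint}

/-- The maximum degree Δ of a family: the maximum number of members containing a common point. -/
def maxDeg (F : Finset (Set Pt)) : ℕ :=
  sSup {n | ∃ p : Pt, (F.filter fun S => p ∈ S).card = n}

/-- The chromatic number χ of the intersection graph of a family. -/
def chromNum (F : Finset (Set Pt)) : ℕ :=
  sInf {n | ∃ col : Set Pt → ℕ, (∀ S ∈ F, col S < n) ∧
    ∀ S ∈ F, ∀ T ∈ F, S ≠ T → (S ∩ T).Nonempty → col S ≠ col T}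

/-- Hitting-`t`-degeneracy: every nonempty subfamily has a member whose closed
neighbourhood within the subfamily can be hit by at most `t` points. -/
def HitDeg (t : ℕ) (F : Finset (Set Pt)) : Prop :=
  ∀ F' ⊆ F, F'.Nonempty → ∃ S ∈ F',
    hitNum (F'.filter fun T => (T ∩ S).Nonempty) ≤ t

/-- `D`-degeneracy of a family: every nonempty subfamily has a member intersecting
at most `D` other members of the subfamily. -/
def FamDeg (D : ℕ) (F : Finset (Set Pt)) : Prop :=
  ∀ F' ⊆ F, F'.Nonempty → ∃ S ∈ F',
    (F'.filter fun T => T ≠ S ∧ (T ∩ S).Nonempty).card ≤ D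

/-- First coordinate of `x - c` in the rotated (by `θ`) orthonormal frame. -/
def sqForm1 (c : Pt) (θ : ℝ) (x : Pt) : ℝ :=
  Real.cos θ * (x 0 - c 0) + Real.sin θ * (x 1 - c 1)

/-- Second coordinate of `x - c` in the rotated (by `θ`) orthonormal frame. -/
def sqForm2 (c : Pt) (θ : ℝ) (x : Pt) : ℝ :=
  Real.sin θ * (x 0 - c 0) - Real.cos θ * (x 1 - c 1)

/-- The (closed, possibly rotated) square with centre `c`, rotation angle `θ` and side `s`. -/
def sqSet (c : Pt) (θ s : ℝ) : Set Pt :=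
  {x | |sqForm1 c θ x| ≤ s / 2 ∧ |sqForm2 c θ x| ≤ s / 2}

/-- The four vertices of the square with centre `c`, angle `θ` and side `s`. -/
def sqVertices (c : Pt) (θ s : ℝ) : Set Pt :=
  {x | |sqForm1 c θ x| = s / 2 ∧ |sqForm2 c θ x| = s / 2}

/-- A set is a (possibly rotated) unit square. -/
def IsUnitSquare (S : Set Pt) : Prop := ∃ c θ, S = sqSet c θ 1

/-- A set is a (possibly rotated) square of some positive side length. -/
def IsSquareSet (S : Set Pt) : Prop := ∃ c θ s, 0 < s ∧ S = sqSet c θ s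

/-!
Let `S` be a member of the family with lowest centre. Every square contains the disc of half its
side about its centre, so the members meeting `S` have their centres in the upper half of the
neighbourhood of `S` of radius half a diagonal, and points at distance at most half a side from
these centres hit them. Six discs of that radius cover the half neighbourhood, for every direction
of the cut. By the symmetries of the square the normal `(a, b)` to the cut may be taken with
`0 ≤ a / b ≤ 1`; this range is divided into sectors, with six fixed disc centres for each sector,
and the covering is checked by recursive subdivision into boxes with integer data. Hence six points
hit `S` and its neighbours, and choosing squares greedily costs six points per member of a packing.
-/

/-! ### Hitting and packing numbers -/

lemma hitNum_le_card {H : Finset Pt} {F : Finset (Set Pt)} (h : Hits H F) :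
    hitNum F ≤ H.card :=
  Nat.sInf_le ⟨H, rfl, h⟩

lemma exists_hits_card_eq_hitNum {F : Finset (Set Pt)} (hF : ∀ S ∈ F, S.Nonempty) :
    ∃ H : Finset Pt, H.card = hitNum F ∧ Hits H F := by
  choose! p hp using hF
  exact Nat.sInf_mem (s := {n | ∃ H : Finset Pt, H.card = n ∧ Hits H F})
    ⟨_, F.image p, rfl, fun S hS => ⟨p S, Finset.mem_image_of_mem p hS, hp S hS⟩⟩

lemma hitNum_union_le {F G : Finset (Set Pt)} (hF : ∀ S ∈ F, S.Nonempty)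
    (hG : ∀ S ∈ G, S.Nonempty) : hitNum (F ∪ G) ≤ hitNum F + hitNum G := by
  obtain ⟨H, hHcard, hH⟩ := exists_hits_card_eq_hitNum hF
  obtain ⟨K, hKcard, hK⟩ := exists_hits_card_eq_hitNum hG
  rw [← hHcard, ← hKcard]
  refine (hitNum_le_card fun S hS => ?_).trans (Finset.card_union_le H K)
  rcases Finset.mem_union.1 hS with hS | hS
  · obtain ⟨p, hp, hpS⟩ := hH S hS
    exact ⟨p, Finset.mem_union_left _ hp, hpS⟩
  · obtain ⟨p, hp, hpS⟩ := hK S hS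
    exact ⟨p, Finset.mem_union_right _ hp, hpS⟩

lemma bddAbove_card_packing (F : Finset (Set Pt)) :
    BddAbove {n | ∃ P ⊆ F, P.card = n ∧ (P : Set (Set Pt)).Pairwise Disjoint} := by
  refine ⟨F.card, ?_⟩
  rintro _ ⟨P, hP, rfl, -⟩
  exact Finset.card_le_card hP

lemma card_le_packNum {P F : Finset (Set Pt)} (hPF : P ⊆ F)
    (hP : (P : Set (Set Pt)).Pairwise Disjoint) : P.card ≤ packNum F :=
  le_csSup (bddAbove_card_packing F) ⟨P, hPF, rfl, hP⟩

lemma exists_packing_card_eq_packNum (F : Finset (Set Pt)) :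
    ∃ P ⊆ F, P.card = packNum F ∧ (P : Set (Set Pt)).Pairwise Disjoint :=
  Nat.sSup_mem (s := {n | ∃ P ⊆ F, P.card = n ∧ (P : Set (Set Pt)).Pairwise Disjoint})
    ⟨0, ∅, Finset.empty_subset F, rfl, by simp⟩ (bddAbove_card_packing F)

lemma packNum_filter_disjoint_add_one_le {F : Finset (Set Pt)} {S : Set Pt} (hS : S ∈ F)
    (hne : S.Nonempty) : packNum (F.filter fun T => ¬(T ∩ S).Nonempty) + 1 ≤ packNum F := by
  obtain ⟨P, hPF, hcard, hP⟩ :=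
    exists_packing_card_eq_packNum (F.filter fun T => ¬(T ∩ S).Nonempty)
  have hdisj : ∀ T ∈ P, Disjoint T S := fun T hT =>
    not_not.1 fun h => (Finset.mem_filter.1 (hPF hT)).2 (Set.not_disjoint_iff_nonempty_inter.1 h)
  have hSP : S ∉ P := fun h => hne.ne_empty (disjoint_self.1 (hdisj S h))
  rw [← hcard, ← Finset.card_insert_of_notMem hSP]
  refine card_le_packNum (Finset.insert_subset hS (hPF.trans (Finset.filter_subset _ _))) ?_
  rw [Finset.coe_insert]
  exact hP.insert fun T hT _ => ⟨(hdisj T hT).symm, hdisj T hT⟩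

lemma hitNum_le_mul_packNum {t : ℕ} {F : Finset (Set Pt)} (hne : ∀ S ∈ F, S.Nonempty)
    (hdeg : HitDeg t F) : hitNum F ≤ t * packNum F := by
  induction F using Finset.strongInduction with
  | H F ih =>
  rcases F.eq_empty_or_nonempty with rfl | hF
  · exact (hitNum_le_card (H := ∅) (by simp [Hits])).trans (Nat.zero_le _)
  obtain ⟨S, hS, ht⟩ := hdeg F subset_rfl hF
  set N := F.filter fun T => (T ∩ S).Nonempty
  set D := F.filter fun T => ¬(T ∩ S).Nonempty
  have hDF : D ⊂ F := Finset.filter_ssubset.2 ⟨S, hS, by simpa using hne S hS⟩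
  have hneN : ∀ T ∈ N, T.Nonempty := fun T hT => hne T (Finset.mem_of_mem_filter T hT)
  have hneD : ∀ T ∈ D, T.Nonempty := fun T hT => hne T (Finset.mem_of_mem_filter T hT)
  have hD : hitNum D ≤ t * packNum D :=
    ih D hDF hneD fun G hG => hdeg G (hG.trans hDF.subset)
  calc hitNum F = hitNum (N ∪ D) := by rw [Finset.filter_union_filter_not_eq]
    _ ≤ hitNum N + hitNum D := hitNum_union_le hneN hneD
    _ ≤ t + t * packNum D := Nat.add_le_add ht hD
    _ = t * (packNum D + 1) := by ring
    _ ≤ t * packNum F :=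
      Nat.mul_le_mul_left t (packNum_filter_disjoint_add_one_le hS (hne S hS))

/-! ### Certifying properties of plane regions by subdivision -/

/-- The number of grid steps in a unit of length: the numerical certificates below are written in
integer multiples of `1 / gridUnit`. -/
def gridUnit : ℕ := 10000

/-- An axis-parallel closed square in the plane, with centre `(x, y)` and half-side `r` given in
grid steps. -/
structure GridBox where
  x : ℤ
  y : ℤ
  r : ℕ

lemma abs_sub_sub_le_or_abs_sub_add_le {X c r h : ℝ} (hr : r ≤ 2 * h) (hX : |X - c| ≤ r) :
    |X - (c - h)| ≤ h ∨ |X - (c + h)| ≤ h := by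
  rw [abs_le] at hX
  rcases le_total X c with hXc | hcX
  · exact Or.inl (abs_le.2 ⟨by linarith, by linarith⟩)
  · exact Or.inr (abs_le.2 ⟨by linarith, by linarith⟩)

namespace GridBox

/-- The plane region described by a grid box. -/
def toSet (b : GridBox) : Set (ℝ × ℝ) :=
  {q | |gridUnit * q.1 - b.x| ≤ b.r ∧ |gridUnit * q.2 - b.y| ≤ b.r}

/-- Four grid boxes covering a grid box. They overlap when its half-side is odd, as the half-side
is rounded up. -/
def quarters (b : GridBox) : List GridBox :=
  let h := (b.r + 1) / 2
  [⟨b.x - h, b.y - h, h⟩, ⟨b.x - h, b.y + h, h⟩, ⟨b.x + h, b.y - h, h⟩, ⟨b.x + h, b.y + h, h⟩]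

/-- Recursive subdivision of a grid box, up to the given depth, into boxes that pass a test. -/
def certify (test : GridBox → Bool) : ℕ → GridBox → Bool
  | 0, b => test b
  | n + 1, b => test b || b.quarters.all (certify test n)

lemma exists_mem_quarters {b : GridBox} {q : ℝ × ℝ} (hq : q ∈ b.toSet) :
    ∃ b' ∈ b.quarters, q ∈ b'.toSet := by
  have hr : (b.r : ℝ) ≤ 2 * ((b.r + 1) / 2 : ℕ) := by
    exact_mod_cast (by omega : b.r ≤ 2 * ((b.r + 1) / 2))
  simp only [quarters, List.mem_cons, List.not_mem_nil, or_false, exists_eq_or_imp,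
    exists_eq_left, toSet, Set.mem_ofPred_eq, Int.cast_sub, Int.cast_add, Int.cast_natCast]
  rcases abs_sub_sub_le_or_abs_sub_add_le hr hq.1 with hx | hx <;>
    rcases abs_sub_sub_le_or_abs_sub_add_le hr hq.2 with hy | hy <;> tauto

lemma forall_mem_of_certify {test : GridBox → Bool} {Q : ℝ × ℝ → Prop}
    (htest : ∀ b, test b → ∀ q ∈ b.toSet, Q q) {n : ℕ} {b : GridBox} (hb : certify test n b) :
    ∀ q ∈ b.toSet, Q q := by
  induction n generalizing b with
  | zero => exact htest b hb
  | succ n ih =>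
    intro q hq
    rw [certify, Bool.or_eq_true, List.all_eq_true] at hb
    rcases hb with hb | hb
    · exact htest b hb q hq
    · obtain ⟨b', hb', hqb'⟩ := exists_mem_quarters hq
      exact ih (hb b' hb') q hqb'

end GridBox

/-! ### Covering half of a neighbourhood of a square by six discs -/

/-- The points at distance at most `√2` from the square `[-1, 1] × [-1, 1]`: the possible centres
of the squares of side `2`, in any position, that meet this square. -/
def squareNhd : Set (ℝ × ℝ) :=
  {q | ∃ u v : ℝ, |u| ≤ 1 ∧ |v| ≤ 1 ∧ (q.1 - u) ^ 2 + (q.2 - v) ^ 2 ≤ 2}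

/-- Six unit discs cover the part of `squareNhd` on the nonnegative side of the line through the
origin with normal `(a, b)`. -/
def HalfCovered (a b : ℝ) : Prop :=
  ∃ P : Finset (ℝ × ℝ), P.card ≤ 6 ∧ ∀ q ∈ squareNhd, 0 ≤ a * q.1 + b * q.2 →
    ∃ p ∈ P, (q.1 - p.1) ^ 2 + (q.2 - p.2) ^ 2 ≤ 1

lemma abs_le_of_mem_squareNhd {q : ℝ × ℝ} (hq : q ∈ squareNhd) :
    |q.1| ≤ 5 / 2 ∧ |q.2| ≤ 5 / 2 := by
  obtain ⟨u, v, hu, hv, hd⟩ := hq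
  have hx : |q.1 - u| ≤ 3 / 2 :=
    abs_le_of_sq_le_sq (by linarith [sq_nonneg (q.2 - v)]) (by norm_num)
  have hy : |q.2 - v| ≤ 3 / 2 :=
    abs_le_of_sq_le_sq (by linarith [sq_nonneg (q.1 - u)]) (by norm_num)
  exact ⟨by linarith [abs_sub_abs_le_abs_sub q.1 u], by linarith [abs_sub_abs_le_abs_sub q.2 v]⟩

lemma nonneg_or_nonneg_of_ratio_mem_Icc {a b d k l x y : ℝ} (hb : 0 < b) (hd : 0 ≤ d)
    (hk : k * b ≤ d * a) (hl : d * a ≤ l * b) (h : 0 ≤ a * x + b * y) :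
    0 ≤ k * x + d * y ∨ 0 ≤ l * x + d * y := by
  have hda : 0 ≤ d * (a * x + b * y) := mul_nonneg hd h
  rcases le_total 0 x with hx | hx
  · have hlx : d * a * x ≤ l * b * x := mul_le_mul_of_nonneg_right hl hx
    exact Or.inr (nonneg_of_mul_nonneg_right (by linarith : 0 ≤ b * (l * x + d * y)) hb)
  · have hkx : d * a * x ≤ k * b * x := mul_le_mul_of_nonpos_right hk hx
    exact Or.inl (nonneg_of_mul_nonneg_right (by linarith : 0 ≤ b * (k * x + d * y)) hb)

namespace GridBox

/-- Test that a grid box is contained in the unit disc about a point given in grid steps. -/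
def inDisc (b : GridBox) (p : ℤ × ℤ) : Bool :=
  ((b.x - p.1).natAbs + b.r) ^ 2 + ((b.y - p.2).natAbs + b.r) ^ 2 ≤ gridUnit ^ 2

/-- Test that a grid box is disjoint from `squareNhd`. The truncated subtractions are the distances
from the box to the two strips `[-1, 1] × ℝ` and `ℝ × [-1, 1]`, in grid steps. -/
def far (b : GridBox) : Bool :=
  2 * gridUnit ^ 2 < (b.x.natAbs - (gridUnit + b.r)) ^ 2 + (b.y.natAbs - (gridUnit + b.r)) ^ 2

/-- Test that a grid box lies on the negative side of the line through the origin with normal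
`(k, 1000)`. -/
def below (b : GridBox) (k : ℕ) : Bool :=
  k * b.x + 1000 * b.y + (k + 1000) * b.r < 0

/-- Test that a grid box is far from the square, or below both lines with normals `(k, 1000)` and
`(l, 1000)`, or inside one of the unit discs about `P`. -/
def settled (k l : ℕ) (P : List (ℤ × ℤ)) (b : GridBox) : Bool :=
  b.far || (b.below k && b.below l) || P.any b.inDisc

lemma dist_sq_le_of_inDisc {b : GridBox} {p : ℤ × ℤ} (h : b.inDisc p) {q : ℝ × ℝ}
    (hq : q ∈ b.toSet) : (q.1 - p.1 / gridUnit) ^ 2 + (q.2 - p.2 / gridUnit) ^ 2 ≤ 1 := by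
  have sq_le {X : ℝ} {c m : ℤ} (hX : |X - c| ≤ b.r) :
      (X - m) ^ 2 ≤ (((c - m).natAbs + b.r : ℕ) : ℝ) ^ 2 := by
    rw [← sq_abs (X - m)]
    refine pow_le_pow_left₀ (abs_nonneg _) ?_ 2
    push_cast [Nat.cast_natAbs]
    linarith [abs_sub_le X c m]
  have hle : (((b.x - p.1).natAbs + b.r : ℕ) : ℝ) ^ 2 + (((b.y - p.2).natAbs + b.r : ℕ) : ℝ) ^ 2
      ≤ gridUnit ^ 2 := by
    exact_mod_cast of_decide_eq_true h
  have hU : (gridUnit : ℝ) ≠ 0 := by norm_num [gridUnit]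
  calc (q.1 - p.1 / gridUnit) ^ 2 + (q.2 - p.2 / gridUnit) ^ 2
      = ((gridUnit * q.1 - p.1) ^ 2 + (gridUnit * q.2 - p.2) ^ 2) / (gridUnit : ℝ) ^ 2 := by
        field_simp
    _ ≤ 1 := div_le_one_of_le₀ (by linarith [sq_le (m := p.1) hq.1, sq_le (m := p.2) hq.2])
        (sq_nonneg _)

lemma notMem_squareNhd_of_far {b : GridBox} (h : b.far) {q : ℝ × ℝ} (hq : q ∈ b.toSet) :
    q ∉ squareNhd := by
  have sq_le {X u : ℝ} {c : ℤ} (hX : |gridUnit * X - c| ≤ b.r) (hu : |u| ≤ 1) :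
      ((c.natAbs - (gridUnit + b.r) : ℕ) : ℝ) ^ 2 ≤ (gridUnit : ℝ) ^ 2 * (X - u) ^ 2 := by
    rw [← mul_pow, ← sq_abs (gridUnit * (X - u))]
    refine pow_le_pow_left₀ (Nat.cast_nonneg _) ?_ 2
    rcases le_total c.natAbs (gridUnit + b.r) with hc | hc
    · rw [Nat.sub_eq_zero_of_le hc, Nat.cast_zero]
      exact abs_nonneg _
    · have hU : |(gridUnit : ℝ) * u| ≤ gridUnit := by
        rw [abs_mul, Nat.abs_cast]
        exact mul_le_of_le_one_right (Nat.cast_nonneg _) hu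
      rw [Nat.cast_sub hc, Nat.cast_natAbs, Int.cast_abs, Nat.cast_add, mul_sub]
      rw [abs_sub_comm] at hX
      linarith [abs_sub_abs_le_abs_sub (c : ℝ) (gridUnit * u),
        abs_sub_le (c : ℝ) (gridUnit * X) (gridUnit * u)]
  rintro ⟨u, v, hu, hv, hd⟩
  have hlt : 2 * (gridUnit : ℝ) ^ 2 < ((b.x.natAbs - (gridUnit + b.r) : ℕ) : ℝ) ^ 2
      + ((b.y.natAbs - (gridUnit + b.r) : ℕ) : ℝ) ^ 2 := by
    exact_mod_cast of_decide_eq_true h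
  have hmul := mul_le_mul_of_nonneg_left hd (sq_nonneg (gridUnit : ℝ))
  linarith [sq_le hq.1 hu, sq_le hq.2 hv]

lemma neg_of_below {b : GridBox} {k : ℕ} (h : b.below k) {q : ℝ × ℝ} (hq : q ∈ b.toSet) :
    k * q.1 + 1000 * q.2 < 0 := by
  have hlt : (k : ℝ) * b.x + 1000 * b.y + (k + 1000) * b.r < 0 := by
    exact_mod_cast of_decide_eq_true h
  have hx := mul_le_mul_of_nonneg_left (le_of_abs_le hq.1) (Nat.cast_nonneg (α := ℝ) k)
  have hy := le_of_abs_le hq.2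
  exact neg_of_mul_neg_right (by linarith : (gridUnit : ℝ) * (k * q.1 + 1000 * q.2) < 0)
    (Nat.cast_nonneg _)

lemma exists_disc_of_settled {k l : ℕ} {P : List (ℤ × ℤ)} {b : GridBox} (h : b.settled k l P)
    {q : ℝ × ℝ} (hqb : q ∈ b.toSet) (hq : q ∈ squareNhd)
    (hkl : 0 ≤ k * q.1 + 1000 * q.2 ∨ 0 ≤ l * q.1 + 1000 * q.2) :
    ∃ p ∈ P, (q.1 - p.1 / gridUnit) ^ 2 + (q.2 - p.2 / gridUnit) ^ 2 ≤ 1 := by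
  rw [settled, Bool.or_eq_true, Bool.or_eq_true, Bool.and_eq_true, List.any_eq_true] at h
  rcases h with (hfar | ⟨hk, hl⟩) | ⟨p, hp, hdisc⟩
  · exact absurd hq (notMem_squareNhd_of_far hfar hqb)
  · exact absurd hkl (not_or.2 ⟨(neg_of_below hk hqb).not_ge, (neg_of_below hl hqb).not_ge⟩)
  · exact ⟨p, hp, dist_sq_le_of_inDisc hdisc hqb⟩

end GridBox

/-- Certificate check for the normals `(a, b)` with `a / b` between `k / 1000` and `l / 1000`, with
the disc centres `P` given in grid steps. The initial box, of half-side `5 / 2`, contains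
`squareNhd`. -/
def sectorCovered (k l : ℕ) (P : List (ℤ × ℤ)) : Bool :=
  P.length ≤ 6 && GridBox.certify (GridBox.settled k l P) 13 ⟨0, 0, 25000⟩

/-- Certificate check for a list of consecutive sectors that ends beyond `a / b = 1`: each entry
`(l, P)` treats the normals with `a / b` between `k / 1000` and `l / 1000`, where `k` is the
previous right end. -/
def sectorsCovered : ℕ → List (ℕ × List (ℤ × ℤ)) → Bool
  | k, [] => 1000 < k
  | k, (l, P) :: L => sectorCovered k l P && sectorsCovered l L

lemma halfCovered_of_sectorCovered {k l : ℕ} {P : List (ℤ × ℤ)} (h : sectorCovered k l P)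
    {a b : ℝ} (hb : 0 < b) (hk : k * b ≤ 1000 * a) (hl : 1000 * a ≤ l * b) : HalfCovered a b := by
  rw [sectorCovered, Bool.and_eq_true, decide_eq_true_eq] at h
  refine ⟨(P.map fun p => ((p.1 / gridUnit : ℝ), (p.2 / gridUnit : ℝ))).toFinset,
    (List.toFinset_card_le _).trans (by simpa using h.1), fun q hq hab => ?_⟩
  have hbox : q ∈ (⟨0, 0, 25000⟩ : GridBox).toSet := by
    obtain ⟨hx, hy⟩ := abs_le_of_mem_squareNhd hq
    constructor <;> norm_num [gridUnit, abs_mul] <;> linarith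
  have hkl := nonneg_or_nonneg_of_ratio_mem_Icc hb (by norm_num) hk hl hab
  have hsettled : ∀ B : GridBox, B.settled k l P → ∀ z ∈ B.toSet, z ∈ squareNhd →
      (0 ≤ k * z.1 + 1000 * z.2 ∨ 0 ≤ l * z.1 + 1000 * z.2) →
      ∃ p ∈ P, (z.1 - p.1 / gridUnit) ^ 2 + (z.2 - p.2 / gridUnit) ^ 2 ≤ 1 :=
    fun _ hB _ hzB hz hkl => GridBox.exists_disc_of_settled hB hzB hz hkl
  obtain ⟨p, hp, hdist⟩ := GridBox.forall_mem_of_certify hsettled h.2 q hbox hq hkl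
  exact ⟨_, List.mem_toFinset.2 (List.mem_map_of_mem hp), hdist⟩

lemma halfCovered_of_sectorsCovered {k : ℕ} {L : List (ℕ × List (ℤ × ℤ))}
    (h : sectorsCovered k L) {a b : ℝ} (hb : 0 < b) (hab : a ≤ b) (hk : k * b ≤ 1000 * a) :
    HalfCovered a b := by
  induction L generalizing k with
  | nil =>
    have hk' : (1000 : ℝ) < k := by exact_mod_cast of_decide_eq_true h
    linarith [mul_lt_mul_of_pos_right hk' hb]
  | cons sector L ih =>
    obtain ⟨l, P⟩ := sector
    rw [sectorsCovered, Bool.and_eq_true] at h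
    rcases le_total (1000 * a) (l * b) with hl | hl
    · exact halfCovered_of_sectorCovered h.1 hb hk hl
    · exact ih h.2 hl

/-- The sectors, with six disc centres for each, as expected by `sectorsCovered`. The centres were
found by numerical optimization. -/
def sectors : List (ℕ × List (ℤ × ℤ)) :=
  [(75, [(-16613, 6357), (-14459, 16401), (-22, 4011),
     (634, 19973), (15071, 15922), (16857, 4973)]),
   (150, [(-16282, 7512), (-13906, 16835), (21, 4324),
     (1862, 20265), (15803, 15474), (17023, 3281)]),
   (235, [(-16060, 8894), (-12775, 17098), (18, 4071),
     (3378, 20348), (16195, 14630), (17291, 1516)]),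
   (328, [(-15586, 10293), (-11378, 17952), (149, 4102),
     (5510, 19962), (16661, 13427), (17417, -551)]),
   (390, [(-14930, 11635), (-9674, 18378), (300, 4003),
     (7411, 19697), (16957, 12273), (17429, -2043)]),
   (437, [(-14604, 12378), (-8044, 19272), (385, 4153),
     (9229, 19004), (17172, -3401), (17333, 11045)]),
   (476, [(-14417, 12861), (-6799, 19553), (466, 3918),
     (10269, 18447), (17167, -4252), (17391, 10249)]),
   (507, [(-14252, 13279), (-5623, 19796), (477, 3790),
     (11196, 17966), (17035, -5001), (17471, 9424)]),
   (539, [(-14098, 13624), (-4458, 20273), (475, 3656),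
     (11956, 17241), (16891, -5702), (17528, 8634)]),
   (574, [(-13921, 13899), (-3693, 20060), (538, 3529),
     (12557, 17162), (16743, -6414), (17637, 7864)]),
   (613, [(-13711, 14198), (-2482, 20676), (601, 3420),
     (13131, 16355), (16512, -7196), (17777, 6936)]),
   (660, [(-13466, 14297), (-2219, 20237), (873, 3262),
     (13450, 16554), (16439, -7855), (18020, 6371)]),
   (715, [(-13171, 14639), (-999, 20166), (897, 2963),
     (14023, 16085), (16213, -8649), (18107, 5319)]),
   (780, [(-12841, 14803), (-267, 20112), (1163, 2837),
     (14448, 15909), (15931, -9449), (18445, 4362)]),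
   (855, [(-12477, 14933), (406, 20170), (1447, 2623),
     (14698, 15645), (15742, -10116), (18793, 3599)]),
   (935, [(-11998, 15326), (1501, 2388), (1659, 20088),
     (15179, 15232), (15374, -10837), (19025, 2346)]),
   (1001, [(-11622, 15294), (1825, 19896), (1947, 2277),
     (15208, -11316), (15419, 15342), (19567, 1791)])]

lemma sectorsCovered_sectors : sectorsCovered 0 sectors := by decide +kernel

lemma halfCovered_of_le {a b : ℝ} (ha : 0 ≤ a) (hb : 0 < b) (hab : a ≤ b) : HalfCovered a b :=
  halfCovered_of_sectorsCovered sectorsCovered_sectors hb hab (by simpa using ha)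

lemma HalfCovered.neg_left {a b : ℝ} (h : HalfCovered a b) : HalfCovered (-a) b := by
  obtain ⟨P, hP, h⟩ := h
  refine ⟨P.image fun p => (-p.1, p.2), Finset.card_image_le.trans hP, fun q hq hab => ?_⟩
  obtain ⟨u, v, hu, hv, hd⟩ := hq
  obtain ⟨p, hp, hpd⟩ := h (-q.1, q.2) ⟨-u, v, by rwa [abs_neg], hv, by linarith⟩ (by linarith)
  exact ⟨_, Finset.mem_image_of_mem _ hp, by linarith⟩

lemma HalfCovered.swap {a b : ℝ} (h : HalfCovered a b) : HalfCovered b a := by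
  obtain ⟨P, hP, h⟩ := h
  refine ⟨P.image Prod.swap, Finset.card_image_le.trans hP, fun q hq hab => ?_⟩
  obtain ⟨u, v, hu, hv, hd⟩ := hq
  obtain ⟨p, hp, hpd⟩ := h q.swap ⟨v, u, hv, hu, by rwa [add_comm]⟩ (by rwa [add_comm])
  exact ⟨_, Finset.mem_image_of_mem _ hp, by rwa [add_comm]⟩

lemma HalfCovered.of_abs_left {a b : ℝ} (h : HalfCovered |a| b) : HalfCovered a b := by
  rcases abs_choice a with ha | ha <;> rw [ha] at h
  · exact h
  · simpa only [neg_neg] using h.neg_left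

lemma halfCovered_of_ne_zero {a b : ℝ} (hab : a ≠ 0 ∨ b ≠ 0) : HalfCovered a b := by
  refine HalfCovered.of_abs_left (HalfCovered.of_abs_left ?_).swap
  rcases le_total |a| |b| with h | h
  · have hb : 0 < |b| := abs_pos.2 fun hb => by simp_all
    exact (halfCovered_of_le (abs_nonneg a) hb h).swap
  · have ha : 0 < |a| := abs_pos.2 fun ha => by simp_all
    exact halfCovered_of_le (abs_nonneg b) ha h

/-! ### Squares -/

section Frame

variable (c : Pt) (θ : ℝ)

lemma sqForm_sub_sq_add_sq (x y : Pt) :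
    (sqForm1 c θ x - sqForm1 c θ y) ^ 2 + (sqForm2 c θ x - sqForm2 c θ y) ^ 2 = dist x y ^ 2 := by
  rw [EuclideanSpace.dist_sq_eq, Fin.sum_univ_two, Real.dist_eq, Real.dist_eq, sq_abs, sq_abs]
  unfold sqForm1 sqForm2
  linear_combination ((x 0 - y 0) ^ 2 + (x 1 - y 1) ^ 2) * Real.sin_sq_add_cos_sq θ

lemma sqForm1_self : sqForm1 c θ c = 0 := by simp [sqForm1]

lemma sqForm2_self : sqForm2 c θ c = 0 := by simp [sqForm2]

lemma sqForm_sq_add_sq (x : Pt) : sqForm1 c θ x ^ 2 + sqForm2 c θ x ^ 2 = dist x c ^ 2 := by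
  simpa only [sqForm1_self, sqForm2_self, sub_zero] using sqForm_sub_sq_add_sq c θ x c

lemma sin_mul_sqForm1_sub_cos_mul_sqForm2 (x : Pt) :
    Real.sin θ * sqForm1 c θ x - Real.cos θ * sqForm2 c θ x = x 1 - c 1 := by
  unfold sqForm1 sqForm2
  linear_combination (x 1 - c 1) * Real.sin_sq_add_cos_sq θ

/-- The point whose coordinates `sqForm1` and `sqForm2` are `r` times those of `p`. -/
def framePt (r : ℝ) (p : ℝ × ℝ) : Pt :=
  !₂[c 0 + r * (Real.cos θ * p.1 + Real.sin θ * p.2),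
    c 1 + r * (Real.sin θ * p.1 - Real.cos θ * p.2)]

lemma sqForm1_framePt (r : ℝ) (p : ℝ × ℝ) : sqForm1 c θ (framePt c θ r p) = r * p.1 := by
  simp only [sqForm1, framePt, PiLp.toLp_apply, Matrix.cons_val_zero, Matrix.cons_val_one]
  linear_combination r * p.1 * Real.sin_sq_add_cos_sq θ

lemma sqForm2_framePt (r : ℝ) (p : ℝ × ℝ) : sqForm2 c θ (framePt c θ r p) = r * p.2 := by
  simp only [sqForm2, framePt, PiLp.toLp_apply, Matrix.cons_val_zero, Matrix.cons_val_one]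
  linear_combination r * p.2 * Real.sin_sq_add_cos_sq θ

lemma closedBall_subset_sqSet (s : ℝ) : Metric.closedBall c (s / 2) ⊆ sqSet c θ s := by
  intro x hx
  have hs : 0 ≤ s / 2 := dist_nonneg.trans hx
  have hd : dist x c ^ 2 ≤ (s / 2) ^ 2 := pow_le_pow_left₀ dist_nonneg hx 2
  rw [← sqForm_sq_add_sq c θ x] at hd
  exact ⟨abs_le_of_sq_le_sq (by linarith [sq_nonneg (sqForm2 c θ x)]) hs,
    abs_le_of_sq_le_sq (by linarith [sq_nonneg (sqForm1 c θ x)]) hs⟩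

variable {c θ}

lemma dist_sq_le_of_mem_sqSet {s : ℝ} {x : Pt} (hx : x ∈ sqSet c θ s) :
    dist x c ^ 2 ≤ 2 * (s / 2) ^ 2 := by
  have h1 : sqForm1 c θ x ^ 2 ≤ (s / 2) ^ 2 := sq_le_sq.2 (hx.1.trans (le_abs_self _))
  have h2 : sqForm2 c θ x ^ 2 ≤ (s / 2) ^ 2 := sq_le_sq.2 (hx.2.trans (le_abs_self _))
  linarith [sqForm_sq_add_sq c θ x]

lemma sqForm_div_mem_squareNhd {s : ℝ} (hs : 0 < s) {d : Pt} {φ : ℝ}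
    (h : (sqSet d φ s ∩ sqSet c θ s).Nonempty) :
    (sqForm1 c θ d / (s / 2), sqForm2 c θ d / (s / 2)) ∈ squareNhd := by
  obtain ⟨x, hxd, hxc⟩ := h
  have hr : 0 < s / 2 := half_pos hs
  refine ⟨sqForm1 c θ x / (s / 2), sqForm2 c θ x / (s / 2), ?_, ?_, ?_⟩
  · rw [abs_div, abs_of_pos hr]
    exact div_le_one_of_le₀ hxc.1 hr.le
  · rw [abs_div, abs_of_pos hr]
    exact div_le_one_of_le₀ hxc.2 hr.le
  · rw [← sub_div, ← sub_div, div_pow _ (s / 2), div_pow _ (s / 2), ← add_div,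
      sqForm_sub_sq_add_sq, dist_comm]
    exact div_le_of_le_mul₀ (sq_nonneg _) zero_le_two (dist_sq_le_of_mem_sqSet hxd)

lemma framePt_mem_closedBall {r : ℝ} (hr : 0 < r) {d : Pt} {p : ℝ × ℝ}
    (h : (sqForm1 c θ d / r - p.1) ^ 2 + (sqForm2 c θ d / r - p.2) ^ 2 ≤ 1) :
    framePt c θ r p ∈ Metric.closedBall d r := by
  refine Metric.mem_closedBall'.2 (le_of_sq_le_sq ?_ hr.le)
  calc dist d (framePt c θ r p) ^ 2
      = (sqForm1 c θ d - r * p.1) ^ 2 + (sqForm2 c θ d - r * p.2) ^ 2 := by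
        rw [← sqForm_sub_sq_add_sq c θ, sqForm1_framePt, sqForm2_framePt]
    _ = r ^ 2 * ((sqForm1 c θ d / r - p.1) ^ 2 + (sqForm2 c θ d / r - p.2) ^ 2) := by
        field_simp
    _ ≤ r ^ 2 := mul_le_of_le_one_right (sq_nonneg r) h

lemma exists_six_points_hitting_closedBalls (c : Pt) (θ : ℝ) {s : ℝ} (hs : 0 < s) :
    ∃ H : Finset Pt, H.card ≤ 6 ∧ ∀ (d : Pt) (φ : ℝ), c 1 ≤ d 1 →
      (sqSet d φ s ∩ sqSet c θ s).Nonempty → ∃ p ∈ H, p ∈ Metric.closedBall d (s / 2) := by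
  have hne : Real.sin θ ≠ 0 ∨ -Real.cos θ ≠ 0 := by
    by_contra! h
    simpa [h.1, neg_eq_zero.1 h.2] using Real.sin_sq_add_cos_sq θ
  have hr : 0 < s / 2 := half_pos hs
  obtain ⟨P, hP, hcov⟩ := halfCovered_of_ne_zero hne
  refine ⟨P.image (framePt c θ (s / 2)), Finset.card_image_le.trans hP, fun d φ hd hmeet => ?_⟩
  have hup : 0 ≤ Real.sin θ * (sqForm1 c θ d / (s / 2))
      + -Real.cos θ * (sqForm2 c θ d / (s / 2)) :=
    calc 0 ≤ (d 1 - c 1) / (s / 2) := div_nonneg (sub_nonneg.2 hd) hr.le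
      _ = _ := by rw [← sin_mul_sqForm1_sub_cos_mul_sqForm2 c θ d]; ring
  obtain ⟨p, hp, hpd⟩ := hcov _ (sqForm_div_mem_squareNhd hs hmeet) hup
  exact ⟨_, Finset.mem_image_of_mem _ hp, framePt_mem_closedBall hr hpd⟩

end Frame

lemma hitDeg_six_of_closedBall_subset_of_subset_sqSet {s : ℝ} (hs : 0 < s) {C : Finset (Set Pt)}
    (h : ∀ S ∈ C, ∃ c θ, Metric.closedBall c (s / 2) ⊆ S ∧ S ⊆ sqSet c θ s) : HitDeg 6 C := by
  intro F hFC hF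
  choose! ctr ang hball hsq using h
  obtain ⟨S, hS, hlowest⟩ := F.exists_min_image (fun T => ctr T 1) hF
  obtain ⟨H, hH, hhit⟩ := exists_six_points_hitting_closedBalls (ctr S) (ang S) hs
  refine ⟨S, hS, (hitNum_le_card fun T hT => ?_).trans hH⟩
  obtain ⟨hTF, hTS⟩ := Finset.mem_filter.1 hT
  obtain ⟨p, hp, hpT⟩ := hhit _ (ang T) (hlowest T hTF)
    (hTS.mono (Set.inter_subset_inter (hsq T (hFC hTF)) (hsq S (hFC hS))))
  exact ⟨p, hp, hball T (hFC hTF) hpT⟩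

theorem stmt_14_general {s : ℝ} (hs : 0 < s) (C : Finset (Set Pt))
    (h : ∀ S ∈ C, ∃ c θ, Metric.closedBall c (s / 2) ⊆ S ∧ S ⊆ sqSet c θ s) :
    hitNum C ≤ 6 * packNum C := by
  refine hitNum_le_mul_packNum (fun S hS => ?_)
    (hitDeg_six_of_closedBall_subset_of_subset_sqSet hs h)
  obtain ⟨c, -, hball, -⟩ := h S hS
  exact ⟨c, hball (Metric.mem_closedBall_self (half_pos hs).le)⟩

theorem stmt_14 (C : Finset (Set Pt)) (h : ∀ S ∈ C, IsUnitSquare S) :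
    hitNum C ≤ 6 * packNum C :=
  stmt_14_general one_pos C fun S hS => by
    obtain ⟨c, θ, rfl⟩ := h S hS
    exact ⟨c, θ, closedBall_subset_sqSet c θ 1, subset_rfl⟩
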